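/- arXiv:1310.2754 — 5 statements merged into one kernel-verified Lean document; each statement's English description precedes it below -/
import Mathlib

section
/- There exist constants C₁, C₂ > 0 such that C₁ n^{−1/θ} ≤ a_n ≤ C₂ n^{−1/θ} for all n ≥ 1. -/
theorem aux_step (θ : ℝ) (hθ0 : 0 < θ) (hθ1 : θ < 1) (A B : ℝ) (hA : 0 < A) (hA1 : A < 1)
    (h : A * (1 + A ^ θ) = B) :
    B ^ (-θ) + θ / 2 ≤ A ^ (-θ) ∧ A ^ (-θ) ≤ B ^ (-θ) + 1 := by
  have hs : 0 < A ^ θ := Real.rpow_pos_of_pos hA θ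
  have hs1 : A ^ θ < 1 := Real.rpow_lt_one hA.le hA1 hθ0
  have hAn : A ^ (-θ) = (A ^ θ)⁻¹ := Real.rpow_neg hA.le θ
  have hB : B ^ (-θ) = (A ^ θ)⁻¹ * ((1 + A ^ θ)⁻¹) ^ θ := by
    rw [← h, Real.mul_rpow hA.le (by linarith), hAn, Real.rpow_neg (by linarith),
      Real.inv_rpow (by linarith)]
  rw [hB, hAn]
  generalize A ^ θ = s at *
  have h1 : ((1 + s)⁻¹) ^ θ ≤ 1 + θ * (-(s / (1 + s))) := by
    have e : (1 + s)⁻¹ = 1 + (-(s / (1 + s))) := by field_simp; ring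
    rw [e]
    apply rpow_one_add_le_one_add_mul_self _ hθ0.le hθ1.le
    rw [neg_le_neg_iff, div_le_one (by linarith)]; linarith
  have h2 : (1 + s)⁻¹ ≤ ((1 + s)⁻¹) ^ θ := by
    have := Real.rpow_le_rpow_of_exponent_ge (x := (1 + s)⁻¹) (by positivity)
      (inv_le_one_of_one_le₀ (by linarith)) hθ1.le
    rwa [Real.rpow_one] at this
  generalize ((1 + s)⁻¹) ^ θ = w at *
  have hw1 : w + θ * s / 2 ≤ 1 := by
    have : s / 2 ≤ s / (1 + s) := div_le_div_of_nonneg_left hs.le (by linarith) (by linarith)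
    nlinarith
  have hw2 : 1 ≤ w + s := by
    have : 1 - s ≤ (1 + s)⁻¹ := by
      rw [← one_div, le_div_iff₀ (by linarith)]; nlinarith
    linarith
  constructor
  · have := mul_le_mul_of_nonneg_left hw1 (inv_pos.2 hs).le
    have e : s⁻¹ * (w + θ * s / 2) = s⁻¹ * w + θ / 2 := by field_simp
    linarith
  · have := mul_le_mul_of_nonneg_left hw2 (inv_pos.2 hs).le
    have e : s⁻¹ * (w + s) = s⁻¹ * w + 1 := by field_simp
    linarith

/-- Let `0 < θ < 1`, let `φ(a) = a(1 + a^θ)` and let `(a_n)` be defined by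
`a₀ ∈ (0,1)` and `a_{n+1} ∈ (0, a_n)` with `φ(a_{n+1}) = a_n`. Then there are constants
`C₁, C₂ > 0` such that `C₁ n^{-1/θ} ≤ a_n ≤ C₂ n^{-1/θ}` for all `n ≥ 1`. -/
theorem intermittent_sequence_asymptotics (θ : ℝ) (hθ0 : 0 < θ) (hθ1 : θ < 1)
    (a : ℕ → ℝ) (ha0 : a 0 ∈ Set.Ioo (0 : ℝ) 1)
    (hrec : ∀ n : ℕ, a (n + 1) ∈ Set.Ioo 0 (a n) ∧
      a (n + 1) * (1 + a (n + 1) ^ θ) = a n) :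
    ∃ C₁ C₂ : ℝ, 0 < C₁ ∧ 0 < C₂ ∧ ∀ n : ℕ, 1 ≤ n →
      C₁ * (n : ℝ) ^ (-(1 / θ)) ≤ a n ∧ a n ≤ C₂ * (n : ℝ) ^ (-(1 / θ)) := by
  have hpos : ∀ n, 0 < a n ∧ a n < 1 := by
    intro n
    induction n with
    | zero => exact ha0
    | succ k ih => exact ⟨(hrec k).1.1, (hrec k).1.2.trans ih.2⟩
  have hv0 : 0 < a 0 ^ (-θ) := Real.rpow_pos_of_pos ha0.1 _
  have hb : ∀ n : ℕ, θ / 2 * n ≤ a n ^ (-θ) ∧ a n ^ (-θ) ≤ a 0 ^ (-θ) + n := by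
    intro n
    induction n with
    | zero => simp [hv0.le]
    | succ k ih =>
      have := aux_step θ hθ0 hθ1 _ _ (hpos (k+1)).1 (hpos (k+1)).2 (hrec k).2
      push_cast
      constructor <;> linarith [this.1, this.2, ih.1, ih.2]
  have hK : 0 < a 0 ^ (-θ) + 1 := by linarith
  refine ⟨(a 0 ^ (-θ) + 1) ^ (-(1 / θ)), (θ / 2) ^ (-(1 / θ)), Real.rpow_pos_of_pos hK _,
    Real.rpow_pos_of_pos (by linarith) _, fun n hn => ?_⟩
  have hn1 : (1 : ℝ) ≤ n := by exact_mod_cast hn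
  have ha : a n = (a n ^ (-θ)) ^ (-(1 / θ)) := by
    rw [← Real.rpow_mul (hpos n).1.le]
    have : -θ * -(1 / θ) = 1 := by field_simp
    rw [this, Real.rpow_one]
  have hneg : -(1 / θ) ≤ 0 := by
    have : 0 < 1 / θ := by positivity
    linarith
  have hvn : 0 < a n ^ (-θ) := Real.rpow_pos_of_pos (hpos n).1 _
  rw [← Real.mul_rpow hK.le (by linarith), ← Real.mul_rpow (by linarith) (by linarith)]
  constructor
  · conv_rhs => rw [ha]
    apply Real.rpow_le_rpow_of_nonpos hvn _ hneg
    nlinarith [(hb n).2]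
  · conv_lhs => rw [ha]
    exact Real.rpow_le_rpow_of_nonpos (by positivity) (hb n).1 hneg
end

section
/- There exists a constant C > 0 such that a_n − a_{n+1} ≤ C n^{−(1+1/θ)} for all n ≥ 1. -/
/-- Let `0 < θ < 1`, let `φ(a) = a(1 + a^θ)` and let `(a_n)` be defined by
`a₀ ∈ (0,1)` and `a_{n+1} ∈ (0, a_n)` with `φ(a_{n+1}) = a_n`. Then there is a constant
`C > 0` such that `a_n - a_{n+1} ≤ C n^{-(1 + 1/θ)}` for all `n ≥ 1`. -/
theorem intermittent_sequence_gap (θ : ℝ) (hθ0 : 0 < θ) (hθ1 : θ < 1)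
    (a : ℕ → ℝ) (ha0 : a 0 ∈ Set.Ioo (0 : ℝ) 1)
    (hrec : ∀ n : ℕ, a (n + 1) ∈ Set.Ioo 0 (a n) ∧
      a (n + 1) * (1 + a (n + 1) ^ θ) = a n) :
    ∃ C : ℝ, 0 < C ∧ ∀ n : ℕ, 1 ≤ n →
      a n - a (n + 1) ≤ C * (n : ℝ) ^ (-(1 + 1 / θ)) := by
  have hpos : ∀ n, 0 < a n := by
    intro n
    cases n with
    | zero => exact ha0.1
    | succ k => exact (hrec k).1.1
  have hlt1 : ∀ n, a n < 1 := by
    intro n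
    induction n with
    | zero => exact ha0.2
    | succ k ih => exact lt_trans (hrec k).1.2 ih
  have hb : ∀ n, 0 < a n ^ θ := fun n => Real.rpow_pos_of_pos (hpos n) θ
  have hb1 : ∀ n, a n ^ θ ≤ 1 := fun n =>
    Real.rpow_le_one (hpos n).le (hlt1 n).le hθ0.le
  have hstep : ∀ n, a (n + 1) ^ θ ≤ a n ^ θ * (1 - θ / 2 * a (n + 1) ^ θ) := by
    intro n
    obtain ⟨_, h2⟩ := hrec n
    have hB := hb (n + 1)
    have hB1 := hb1 (n + 1)
    have hA := hpos (n + 1)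
    have h0 := hb n
    generalize hβ : a (n + 1) ^ θ = β at *
    have h3 : a (n + 1) ≤ a n * (1 + -(β / 2)) := by
      rw [← h2]
      have : 0 ≤ a (n + 1) * (β * (1 - β)) := by
        have : 0 ≤ 1 - β := by linarith
        positivity
      nlinarith
    have h4 : a (n + 1) ^ θ ≤ (a n * (1 + -(β / 2))) ^ θ :=
      Real.rpow_le_rpow hA.le h3 hθ0.le
    rw [Real.mul_rpow (hpos n).le (by linarith), hβ] at h4
    have h5 : (1 + -(β / 2)) ^ θ ≤ 1 + θ * (-(β / 2)) :=
      rpow_one_add_le_one_add_mul_self (by linarith) hθ0.le hθ1.le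
    calc β ≤ _ := h4
      _ ≤ a n ^ θ * (1 + θ * (-(β / 2))) := mul_le_mul_of_nonneg_left h5 h0.le
      _ = _ := by ring
  have hinv : ∀ n : ℕ, θ / 2 * n ≤ (a n ^ θ)⁻¹ := by
    intro n
    induction n with
    | zero => simpa using (hb 0).le
    | succ k ih =>
      have h := hstep k
      have h0 := hb k
      have h1 := hb (k + 1)
      have h6 : (a k ^ θ)⁻¹ + θ / 2 ≤ (a (k + 1) ^ θ)⁻¹ := by
        generalize a (k + 1) ^ θ = β at *
        generalize a k ^ θ = γ at *
        have h7 : γ⁻¹ + θ / 2 = (β + θ / 2 * γ * β) / (γ * β) := by field_simp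
        have h8 : β⁻¹ = γ / (γ * β) := by field_simp
        rw [h7, h8]
        apply div_le_div_of_nonneg_right _ (by positivity)
        linarith
      push_cast
      linarith
  refine ⟨(2 / θ) ^ (1 + 1 / θ), by positivity, ?_⟩
  intro n hn
  have hn' : (0 : ℝ) < n := by exact_mod_cast hn
  have hbn : a n ^ θ ≤ 2 / θ * (n : ℝ)⁻¹ := by
    have := inv_anti₀ (by positivity) (hinv n)
    rw [inv_inv] at this
    calc _ ≤ _ := this
      _ = _ := by field_simp
  have hA := hpos (n + 1)
  calc a n - a (n + 1) = a (n + 1) ^ (1 + θ) := by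
        rw [Real.rpow_add hA, Real.rpow_one]
        linarith [(hrec n).2]
    _ ≤ a n ^ (1 + θ) := Real.rpow_le_rpow hA.le (hrec n).1.2.le (by linarith)
    _ = (a n ^ θ) ^ (1 + 1 / θ) := by
        rw [← Real.rpow_mul (hpos n).le]
        congr 1
        field_simp
        try ring
    _ ≤ (2 / θ * (n : ℝ)⁻¹) ^ (1 + 1 / θ) :=
        Real.rpow_le_rpow (hb n).le hbn (by positivity)
    _ = _ := by
        rw [Real.mul_rpow (by positivity) (by positivity), Real.inv_rpow hn'.le,
          Real.rpow_neg hn'.le]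
end

section
/- There exists a constant C > 0 such that for all n ≥ 1 and all x ∈ [a_{n+1}, a_n], the derivative of the n-th iterate of φ satisfies |(φⁿ)'(x)| ≥ C n^{1/θ + 1}. -/
/-- Let `0 < θ < 1`, let `φ(a) = a(1 + a^θ)` and let `(a_n)` be defined by
`a₀ ∈ (0,1)` and `a_{n+1} ∈ (0, a_n)` with `φ(a_{n+1}) = a_n`. Then there is a constant
`C > 0` such that for all `n ≥ 1` and all `x ∈ [a_{n+1}, a_n]`, the derivative of the `n`-th
iterate of `φ` satisfies `|(φⁿ)'(x)| ≥ C n^{1/θ + 1}`. -/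
theorem intermittent_iterate_derivative_lower_bound (θ : ℝ) (hθ0 : 0 < θ) (hθ1 : θ < 1)
    (a : ℕ → ℝ) (ha0 : a 0 ∈ Set.Ioo (0 : ℝ) 1)
    (hrec : ∀ n : ℕ, a (n + 1) ∈ Set.Ioo 0 (a n) ∧
      a (n + 1) * (1 + a (n + 1) ^ θ) = a n) :
    ∃ C : ℝ, 0 < C ∧ ∀ n : ℕ, 1 ≤ n → ∀ x ∈ Set.Icc (a (n + 1)) (a n),
      C * (n : ℝ) ^ (1 / θ + 1) ≤
        |deriv ((fun y : ℝ => y * (1 + y ^ θ))^[n]) x| := by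
  have hpos : ∀ n, 0 < a n := by
    intro n
    cases n with
    | zero => exact ha0.1
    | succ k => exact (hrec k).1.1
  obtain ⟨u, hu⟩ : ∃ u : ℕ → ℝ, ∀ n, u n = (a n ^ θ)⁻¹ := ⟨_, fun _ => rfl⟩
  have hupos : ∀ n, 0 < u n := fun n => by
    rw [hu]; exact inv_pos.2 (Real.rpow_pos_of_pos (hpos n) _)
  have hstep : ∀ n, u (n + 1) ≤ u n + θ := by
    intro n
    have h1 := (hrec n).2
    have hp := hpos (n + 1)
    have ht : 0 < a (n + 1) ^ θ := Real.rpow_pos_of_pos hp _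
    have h2 : a n ^ θ = a (n + 1) ^ θ * (1 + a (n + 1) ^ θ) ^ θ := by
      rw [← Real.mul_rpow hp.le (by positivity), h1]
    have hB := rpow_one_add_le_one_add_mul_self (s := a (n + 1) ^ θ) (p := θ)
      (by linarith) hθ0.le hθ1.le
    rw [hu, hu, h2]
    generalize a (n + 1) ^ θ = t at *
    have hq : 0 < (1 + t) ^ θ := by positivity
    generalize (1 + t) ^ θ = q at *
    have h3 : t⁻¹ - θ ≤ (t * q)⁻¹ := by
      rw [← one_div (t * q), le_div_iff₀ (by positivity)]
      have : (t⁻¹ - θ) * (t * q) = q * (1 - θ * t) := by field_simp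
      rw [this]
      rcases le_total (1 - θ * t) 0 with h | h
      · nlinarith
      · nlinarith [mul_le_mul_of_nonneg_right hB h, sq_nonneg (θ * t)]
    linarith
  have hbound : ∀ n : ℕ, u n ≤ u 0 + θ * n := by
    intro n
    induction n with
    | zero => simp
    | succ k ih => have := hstep k; push_cast; linarith
  obtain ⟨b, hb⟩ : ∃ b, b = u 0 / θ := ⟨_, rfl⟩
  have hbpos : 0 < b := by rw [hb]; exact div_pos (hupos 0) hθ0
  obtain ⟨p, hp⟩ : ∃ p, p = 1 / θ + 1 := ⟨_, rfl⟩
  have hppos : 0 < p := by rw [hp]; positivity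
  obtain ⟨c, hc⟩ : ∃ c, c = 2 + b + p := ⟨_, rfl⟩
  have hcpos : 0 < c := by rw [hc]; positivity
  have hfac : ∀ n : ℕ, ((n + 1 + c) / (n + c)) ^ p ≤ 1 + (1 + θ) * a (n + 2) ^ θ := by
    intro n
    have hn : (0 : ℝ) ≤ n := n.cast_nonneg
    obtain ⟨m, hm⟩ : ∃ m : ℝ, m = n + 2 + b := ⟨_, rfl⟩
    have hmpos : 0 < m := by rw [hm]; positivity
    have e1 : ((n : ℝ) + 1 + c) / (n + c) = 1 + 1 / (m + p) := by
      have : (n : ℝ) + c = m + p := by rw [hm, hc]; ring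
      have h' : (n : ℝ) + 1 + c = m + p + 1 := by rw [hm, hc]; ring
      rw [this, h']; field_simp
    have e2 : (1 + θ) * a (n + 2) ^ θ ≥ p / m := by
      have h1 := hbound (n + 2)
      have h2 : u 0 + θ * ((n + 2 : ℕ) : ℝ) = θ * m := by
        rw [hm, hb]; push_cast; field_simp; ring
      rw [h2] at h1
      have h3 : a (n + 2) ^ θ = (u (n + 2))⁻¹ := by rw [hu, inv_inv]
      have h4 : (θ * m)⁻¹ ≤ (u (n + 2))⁻¹ := inv_anti₀ (hupos _) h1
      have h5 : p / m = (1 + θ) * (θ * m)⁻¹ := by rw [hp]; field_simp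
      rw [h3, h5]
      exact mul_le_mul_of_nonneg_left h4 (by linarith)
    have e3 : (1 + 1 / (m + p)) ^ p ≤ Real.exp (p / (m + p)) := by
      have : 1 + 1 / (m + p) ≤ Real.exp (1 / (m + p)) := by
        have := Real.add_one_le_exp (1 / (m + p)); linarith
      calc _ ≤ Real.exp (1 / (m + p)) ^ p :=
            Real.rpow_le_rpow (by positivity) this hppos.le
        _ = _ := by rw [← Real.exp_mul]; congr 1; ring
    have e4 : Real.exp (p / (m + p)) ≤ 1 + p / m := by
      have h1 := Real.add_one_le_exp (-(p / (m + p)))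
      rw [Real.exp_neg] at h1
      have h2 : -(p / (m + p)) + 1 = (1 + p / m)⁻¹ := by field_simp; ring
      rw [h2] at h1
      exact (inv_le_inv₀ (by positivity) (Real.exp_pos _)).1 h1
    rw [e1]
    linarith
  have main : ∀ n : ℕ, ∀ x ∈ Set.Icc (a (n + 1)) (a n), ∃ D : ℝ,
      HasDerivAt ((fun y : ℝ => y * (1 + y ^ θ))^[n]) D x ∧ ((n + c) / c) ^ p ≤ D := by
    intro n
    induction n with
    | zero =>
      intro x _
      refine ⟨1, ?_, ?_⟩
      · simpa using hasDerivAt_id x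
      · simp [div_self hcpos.ne']
    | succ k ih =>
      intro x hx
      have hxpos : 0 < x := lt_of_lt_of_le (hpos _) hx.1
      have hmono : ∀ y z : ℝ, 0 < y → y ≤ z → y * (1 + y ^ θ) ≤ z * (1 + z ^ θ) := by
        intro y z hy hyz
        have := Real.rpow_le_rpow hy.le hyz hθ0.le
        have h0 : 0 < y ^ θ := by positivity
        exact mul_le_mul hyz (by linarith) (by linarith) (by linarith)
      have hmem : x * (1 + x ^ θ) ∈ Set.Icc (a (k + 1)) (a k) := by
        constructor
        · rw [← (hrec (k + 1)).2]; exact hmono _ _ (hpos _) hx.1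
        · rw [← (hrec k).2]; exact hmono _ _ hxpos hx.2
      obtain ⟨D, hD, hDle⟩ := ih _ hmem
      have hd : HasDerivAt (fun y : ℝ => y * (1 + y ^ θ)) (1 + (1 + θ) * x ^ θ) x := by
        have h1 := (hasDerivAt_id x).mul
          ((Real.hasDerivAt_rpow_const (p := θ) (Or.inl hxpos.ne')).const_add 1)
        refine h1.congr_deriv ?_
        have : x ^ θ = x * x ^ (θ - 1) := by
          rw [Real.rpow_sub_one hxpos.ne']; field_simp
        simp only [id]
        linear_combination (-θ) * this
      refine ⟨D * (1 + (1 + θ) * x ^ θ), ?_, ?_⟩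
      · rw [Function.iterate_succ]
        exact HasDerivAt.comp x hD hd
      · have hk : (0 : ℝ) ≤ k := k.cast_nonneg
        have h1 := hfac k
        have h2 := Real.rpow_le_rpow (hpos (k + 2)).le hx.1 hθ0.le
        have h3 : (((k + 1 : ℕ) : ℝ) + c) / c = ((k + c) / c) * ((k + 1 + c) / (k + c)) := by
          have : (k : ℝ) + c ≠ 0 := by positivity
          push_cast; field_simp
        rw [h3, Real.mul_rpow (by positivity) (by positivity)]
        have h4 : (0 : ℝ) ≤ ((k + c) / c) ^ p := by positivity
        refine mul_le_mul hDle (h1.trans ?_) (by positivity) (h4.trans hDle)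
        have := mul_le_mul_of_nonneg_left h2 (by linarith : 0 ≤ 1 + θ)
        linarith
  refine ⟨(1 / c) ^ p, by positivity, ?_⟩
  intro n _ x hx
  obtain ⟨D, hD, hle⟩ := main n x hx
  have hn : (0 : ℝ) ≤ n := n.cast_nonneg
  rw [hD.deriv, ← hp, ← Real.mul_rpow (by positivity) hn]
  refine le_trans (Real.rpow_le_rpow (by positivity) ?_ hppos.le) (hle.trans (le_abs_self D))
  rw [div_mul_eq_mul_div, one_mul]
  gcongr
  linarith
end

section
/- There exists a constant C > 0 such that for all n ≥ 1, all 1 ≤ i ≤ n and all a, b ∈ [a_{n+1}, a_n], one has log((φ^i)'(a) / (φ^i)'(b)) ≤ C · |φ^i(a) − φ^i(b)| / (a_{n−i} − a_{n−i+1}), and moreover this quantity is at most C. -/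
lemma iid_mvt (f f' : ℝ → ℝ) (y x : ℝ) (hy : 0 < y) (hyx : y ≤ x)
    (h : ∀ z, 0 < z → HasDerivAt f (f' z) z) :
    ∃ ξ ∈ Set.Icc y x, f x - f y = f' ξ * (x - y) := by
  rcases hyx.eq_or_lt with rfl | hlt
  · exact ⟨y, ⟨le_rfl, le_rfl⟩, by simp⟩
  · obtain ⟨c, hc, h2⟩ := exists_hasDerivAt_eq_slope f f' hlt
      (fun z hz => (h z (hy.trans_le hz.1)).continuousAt.continuousWithinAt)
      (fun z hz => h z (hy.trans hz.1))
    refine ⟨c, ⟨hc.1.le, hc.2.le⟩, ?_⟩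
    rw [h2, div_mul_cancel₀]
    linarith

lemma iid_deriv (θ z : ℝ) (hz : 0 < z) :
    HasDerivAt (fun z : ℝ => z * (1 + z ^ θ)) (1 + (1 + θ) * z ^ θ) z := by
  have h1 := (hasDerivAt_id z).mul ((Real.hasDerivAt_rpow_const (p := θ) (Or.inl hz.ne')).const_add 1)
  refine h1.congr_deriv ?_
  have : z ^ θ = z ^ (θ - 1) * z := by
    rw [← Real.rpow_add_one hz.ne']; ring_nf
  simp only [id]
  rw [this]; ring

/-- difference of derivatives -/
lemma iid_dd (θ u y x : ℝ) (hθ0 : 0 < θ) (hθ1 : θ < 1) (hu : 0 < u) (huy : u ≤ y) (hyx : y ≤ x) :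
    (1 + (1 + θ) * x ^ θ) - (1 + (1 + θ) * y ^ θ) ≤ 2 * u ^ (θ - 1) * (x - y) := by
  obtain ⟨ξ, hξ, h⟩ := iid_mvt (fun z => z ^ θ) (fun z => θ * z ^ (θ - 1)) y x (hu.trans_le huy) hyx
    (fun z hz => Real.hasDerivAt_rpow_const (Or.inl hz.ne'))
  try simp only at h
  have h1 : ξ ^ (θ - 1) ≤ u ^ (θ - 1) :=
    Real.rpow_le_rpow_of_nonpos hu (huy.trans hξ.1) (by linarith)
  have h2 : 0 < ξ ^ (θ - 1) := Real.rpow_pos_of_pos (hu.trans_le (huy.trans hξ.1)) _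
  have h3 : (1 + (1 + θ) * x ^ θ) - (1 + (1 + θ) * y ^ θ) = ((1 + θ) * θ) * ξ ^ (θ - 1) * (x - y) := by
    linear_combination (1 + θ) * h
  rw [h3]
  have h4 : (1 + θ) * θ ≤ 2 := by nlinarith
  have h5 : 0 ≤ x - y := by linarith
  gcongr

lemma iid_step (θ u v w y x : ℝ) (hθ0 : 0 < θ) (hθ1 : θ < 1) (hu : 0 < u)
    (huv : u * (1 + u ^ θ) = v) (hvw : v * (1 + v ^ θ) = w) (hv1 : v ≤ 1)
    (huy : u ≤ y) (hyx : y ≤ x) (hxv : x ≤ v) :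
    Real.log (1 + (1 + θ) * x ^ θ) - Real.log (1 + (1 + θ) * y ^ θ) ≤
      2 * (u ^ θ) ^ 2 * ((x - y) / (v - u)) ∧
    (x - y) / (v - u) ≤ (1 + 2 * (u ^ θ) ^ 2) *
      ((x * (1 + x ^ θ) - y * (1 + y ^ θ)) / (w - v)) := by
  have hU : 0 < u ^ θ := Real.rpow_pos_of_pos hu _
  have hy : 0 < y := hu.trans_le huy
  have hx : 0 < x := hy.trans_le hyx
  have hv : 0 < v := hx.trans_le hxv
  have hV : 0 < v ^ θ := Real.rpow_pos_of_pos hv _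
  have hY : 0 < y ^ θ := Real.rpow_pos_of_pos hy _
  have hX : 0 < x ^ θ := Real.rpow_pos_of_pos hx _
  have hvu : v - u = u * u ^ θ := by rw [← huv]; ring
  have hvu0 : 0 < v - u := by rw [hvu]; positivity
  have hwv0 : 0 < w - v := by
    have : w - v = v * v ^ θ := by rw [← hvw]; ring
    rw [this]; positivity
  have hpow : u ^ (θ - 1) = u ^ θ / u := Real.rpow_sub_one hu.ne' θ
  have key : ∀ t, u ^ (θ - 1) * t = (u ^ θ) ^ 2 * (t / (v - u)) := by
    intro t; rw [hpow, hvu]; field_simp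
  constructor
  · have h1 := iid_dd θ u y x hθ0 hθ1 hu huy hyx
    rw [mul_assoc, key] at h1
    rw [mul_assoc]
    refine le_trans ?_ h1
    have hp : 0 < 1 + (1 + θ) * x ^ θ := by positivity
    have hq : 0 < 1 + (1 + θ) * y ^ θ := by positivity
    have hpq : 1 + (1 + θ) * y ^ θ ≤ 1 + (1 + θ) * x ^ θ := by gcongr
    rw [← Real.log_div hp.ne' hq.ne']
    refine (Real.log_le_sub_one_of_pos (by positivity)).trans ?_
    rw [div_sub_one hq.ne', div_le_iff₀ hq]
    nlinarith [mul_nonneg (sub_nonneg.2 hpq) (by positivity : 0 ≤ (1 + θ) * y ^ θ)]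
  · obtain ⟨ξ, hξ, h1⟩ := iid_mvt _ _ y x hy hyx (iid_deriv θ)
    obtain ⟨η, hη, h2⟩ := iid_mvt _ _ u v hu (by linarith) (iid_deriv θ)
    try simp only at h1 h2
    rw [huv, hvw] at h2
    have h3 := iid_dd θ u u v hθ0 hθ1 hu le_rfl (by linarith)
    rw [mul_assoc, key, div_self hvu0.ne', mul_one] at h3
    have h4 : u ^ θ ≤ ξ ^ θ := Real.rpow_le_rpow hu.le (huy.trans hξ.1) hθ0.le
    have h5 : η ^ θ ≤ v ^ θ := Real.rpow_le_rpow (hu.le.trans hη.1) hη.2 hθ0.le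
    have h6 : 1 + (1 + θ) * η ^ θ ≤ (1 + 2 * (u ^ θ) ^ 2) * (1 + (1 + θ) * ξ ^ θ) := by
      have a1 : (1 + θ) * η ^ θ ≤ (1 + θ) * v ^ θ := by gcongr
      have a2 : (1 + θ) * u ^ θ ≤ (1 + θ) * ξ ^ θ := by gcongr
      have a3 : 0 ≤ 2 * (u ^ θ) ^ 2 * ((1 + θ) * ξ ^ θ) := by
        have : 0 < ξ ^ θ := hU.trans_le h4
        positivity
      nlinarith
    have hxy : 0 ≤ x - y := by linarith
    rw [h1, h2, div_le_iff₀ hvu0]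
    have hne : 0 < 1 + (1 + θ) * η ^ θ := by
      have : 0 < η ^ θ := Real.rpow_pos_of_pos (hu.trans_le hη.1) _
      positivity
    have h7 : (1 + 2 * (u ^ θ) ^ 2) * ((1 + (1 + θ) * ξ ^ θ) * (x - y) /
        ((1 + (1 + θ) * η ^ θ) * (v - u))) * (v - u) =
        ((1 + 2 * (u ^ θ) ^ 2) * (1 + (1 + θ) * ξ ^ θ)) * (x - y) / (1 + (1 + θ) * η ^ θ) := by
      field_simp
    rw [h7, le_div_iff₀ hne, mul_comm]
    gcongr

lemma iid_tel (θ u v : ℝ) (hθ0 : 0 < θ) (hu : 0 < u) (hu1 : u ≤ 1)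
    (huv : u * (1 + u ^ θ) = v) : 4 * (u ^ θ) ^ 2 ≤ 8 / θ * (v ^ θ - u ^ θ) := by
  have hU : 0 < u ^ θ := Real.rpow_pos_of_pos hu _
  have hU1 : u ^ θ ≤ 1 := Real.rpow_le_one hu.le hu1 hθ0.le
  rw [← huv, Real.mul_rpow hu.le (by positivity)]
  set U := u ^ θ
  have h1 : 1 + θ * U / 2 ≤ (1 + U) ^ θ := by
    rw [Real.rpow_def_of_pos (by positivity)]
    refine le_trans ?_ (Real.add_one_le_exp _)
    have := Real.one_sub_inv_le_log_of_pos (by positivity : 0 < 1 + U)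
    have h2 : U / 2 ≤ 1 - (1 + U)⁻¹ := by
      have : 1 - (1 + U)⁻¹ = U / (1 + U) := by field_simp; ring
      rw [this]
      gcongr
      linarith
    nlinarith
  have h2 : 4 * U ^ 2 = 8 / θ * (U * (1 + θ * U / 2) - U) := by field_simp; ring
  rw [h2]
  gcongr

lemma iid_main (θ : ℝ) (hθ0 : 0 < θ) (hθ1 : θ < 1)
    (a : ℕ → ℝ) (ha0 : a 0 ∈ Set.Ioo (0 : ℝ) 1)
    (hrec : ∀ n : ℕ, a (n + 1) ∈ Set.Ioo 0 (a n) ∧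
      a (n + 1) * (1 + a (n + 1) ^ θ) = a n) (n : ℕ) (y x : ℝ)
    (hy : a (n + 1) ≤ y) (hyx : y ≤ x) (hx : x ≤ a n) (i m : ℕ) (him : i + m = n) :
    ∃ X Y p q : ℝ, (fun z : ℝ => z * (1 + z ^ θ))^[i] x = X ∧
      (fun z : ℝ => z * (1 + z ^ θ))^[i] y = Y ∧
      a (m + 1) ≤ Y ∧ Y ≤ X ∧ X ≤ a m ∧
      HasDerivAt ((fun z : ℝ => z * (1 + z ^ θ))^[i]) p x ∧
      HasDerivAt ((fun z : ℝ => z * (1 + z ^ θ))^[i]) q y ∧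
      0 < q ∧ q ≤ p ∧
      Real.log p - Real.log q ≤
        Real.exp (8 / θ * a (m + 1) ^ θ) * ((X - Y) / (a m - a (m + 1))) := by
  have hpos : ∀ k, 0 < a k := by
    intro k
    cases k with
    | zero => exact ha0.1
    | succ k => exact (hrec k).1.1
  have hle1 : ∀ k, a k ≤ 1 := by
    intro k
    induction k with
    | zero => exact ha0.2.le
    | succ k ih => exact (hrec k).1.2.le.trans ih
  induction i generalizing m with
  | zero =>
    obtain rfl : m = n := by omega
    refine ⟨x, y, 1, 1, rfl, rfl, hy, hyx, hx, hasDerivAt_id x, hasDerivAt_id y, one_pos, le_rfl, ?_⟩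
    have h1 : 0 < a m - a (m + 1) := by linarith [(hrec m).1.2]
    have h2 : 0 ≤ x - y := by linarith
    rw [sub_self]
    positivity
  | succ i ih =>
    obtain ⟨X, Y, p, q, hX, hY, h1, h2, h3, hp, hq, q0, qp, hlog⟩ := ih (m + 1) (by omega)
    have hY0 : 0 < Y := (hpos _).trans_le h1
    have hX0 : 0 < X := hY0.trans_le h2
    have hXY : Y ^ θ ≤ X ^ θ := Real.rpow_le_rpow hY0.le h2 hθ0.le
    have hYθ : 0 < Y ^ θ := Real.rpow_pos_of_pos hY0 _
    have hXθ : 0 < X ^ θ := Real.rpow_pos_of_pos hX0 _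
    have p0 : 0 < p := q0.trans_le qp
    obtain ⟨s1, s2⟩ := iid_step θ (a (m + 1 + 1)) (a (m + 1)) (a m) Y X hθ0 hθ1 (hpos _)
      (hrec _).2 (hrec _).2 (hle1 _) h1 h2 h3
    have htel := iid_tel θ (a (m + 1 + 1)) (a (m + 1)) hθ0 (hpos _) (hle1 _) (hrec _).2
    refine ⟨X * (1 + X ^ θ), Y * (1 + Y ^ θ), (1 + (1 + θ) * X ^ θ) * p, (1 + (1 + θ) * Y ^ θ) * q,
      by rw [Function.iterate_succ_apply', hX], by rw [Function.iterate_succ_apply', hY],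
      ?_, ?_, ?_, ?_, ?_, ?_, ?_, ?_⟩
    · rw [← (hrec (m + 1)).2]
      have := Real.rpow_le_rpow (hpos _).le h1 hθ0.le
      have := Real.rpow_pos_of_pos (hpos (m + 1 + 1)) θ
      gcongr
    · gcongr
    · rw [← (hrec m).2]
      have := Real.rpow_le_rpow hX0.le h3 hθ0.le
      have := hpos (m + 1)
      gcongr
    · rw [Function.iterate_succ']
      exact HasDerivAt.comp x (by rw [hX]; exact iid_deriv θ X hX0) hp
    · rw [Function.iterate_succ']
      exact HasDerivAt.comp y (by rw [hY]; exact iid_deriv θ Y hY0) hq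
    · positivity
    · gcongr
    · rw [Real.log_mul (by positivity) p0.ne', Real.log_mul (by positivity) q0.ne']
      set ε := (a (m + 1 + 1) ^ θ) ^ 2 with hε
      set r := (X - Y) / (a (m + 1) - a (m + 1 + 1))
      set r' := (X * (1 + X ^ θ) - Y * (1 + Y ^ θ)) / (a m - a (m + 1)) with hr'
      set G := Real.exp (8 / θ * a (m + 1 + 1) ^ θ) with hG
      have hε0 : 0 ≤ ε := by positivity
      have hG1 : 1 ≤ G := by
        apply Real.one_le_exp
        have := Real.rpow_pos_of_pos (hpos (m + 1 + 1)) θ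
        positivity
      have hr0 : 0 ≤ r' := by
        apply div_nonneg
        · rw [sub_nonneg]; gcongr
        · linarith [(hrec m).1.2]
      have hGG : (G + 2 * ε) * (1 + 2 * ε) ≤ Real.exp (8 / θ * a (m + 1) ^ θ) := by
        calc (G + 2 * ε) * (1 + 2 * ε) ≤ (G * (2 * ε + 1)) * (2 * ε + 1) := by
              have : 0 ≤ (G - 1) * ε := mul_nonneg (by linarith) hε0
              have h8 : G + 2 * ε ≤ G * (2 * ε + 1) := by nlinarith
              rw [add_comm 1 (2 * ε)]
              gcongr
          _ ≤ (G * Real.exp (2 * ε)) * Real.exp (2 * ε) := by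
              gcongr <;> exact Real.add_one_le_exp _
          _ = Real.exp (8 / θ * a (m + 1 + 1) ^ θ + 4 * ε) := by
              rw [hG, ← Real.exp_add, ← Real.exp_add]; ring_nf
          _ ≤ _ := by
              apply Real.exp_le_exp.2
              linarith
      calc _ ≤ (G + 2 * ε) * r := by linarith
        _ ≤ (G + 2 * ε) * ((1 + 2 * ε) * r') := by gcongr
        _ = ((G + 2 * ε) * (1 + 2 * ε)) * r' := by ring
        _ ≤ _ := by gcongr

/-- Let `0 < θ < 1`, let `φ(a) = a(1 + a^θ)` and let `(a_n)` be defined by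
`a₀ ∈ (0,1)` and `a_{n+1} ∈ (0, a_n)` with `φ(a_{n+1}) = a_n`. Then there is `C > 0` such
that for all `n ≥ 1`, all `1 ≤ i ≤ n` and all `x, y ∈ [a_{n+1}, a_n]`,
`log((φ^i)'(x)/(φ^i)'(y)) ≤ C |φ^i(x) - φ^i(y)| / (a_{n-i} - a_{n-i+1})`, and moreover this
bound is at most `C`. -/
theorem intermittent_iterate_distortion (θ : ℝ) (hθ0 : 0 < θ) (hθ1 : θ < 1)
    (a : ℕ → ℝ) (ha0 : a 0 ∈ Set.Ioo (0 : ℝ) 1)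
    (hrec : ∀ n : ℕ, a (n + 1) ∈ Set.Ioo 0 (a n) ∧
      a (n + 1) * (1 + a (n + 1) ^ θ) = a n) :
    ∃ C : ℝ, 0 < C ∧ ∀ n : ℕ, 1 ≤ n → ∀ i : ℕ, 1 ≤ i → i ≤ n →
      ∀ x ∈ Set.Icc (a (n + 1)) (a n), ∀ y ∈ Set.Icc (a (n + 1)) (a n),
        Real.log (deriv ((fun z : ℝ => z * (1 + z ^ θ))^[i]) x /
              deriv ((fun z : ℝ => z * (1 + z ^ θ))^[i]) y) ≤
            C * |(fun z : ℝ => z * (1 + z ^ θ))^[i] x -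
                (fun z : ℝ => z * (1 + z ^ θ))^[i] y| /
              (a (n - i) - a (n - i + 1)) ∧
          C * |(fun z : ℝ => z * (1 + z ^ θ))^[i] x -
              (fun z : ℝ => z * (1 + z ^ θ))^[i] y| /
            (a (n - i) - a (n - i + 1)) ≤ C := by
  have hpos : ∀ k, 0 < a k := by
    intro k
    cases k with
    | zero => exact ha0.1
    | succ k => exact (hrec k).1.1
  have hle1 : ∀ k, a k ≤ 1 := by
    intro k
    induction k with
    | zero => exact ha0.2.le
    | succ k ih => exact (hrec k).1.2.le.trans ih
  refine ⟨Real.exp (8 / θ), Real.exp_pos _, ?_⟩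
  intro n _ i _ hin x hx y hy
  have hΔ : 0 < a (n - i) - a (n - i + 1) := by linarith [(hrec (n - i)).1.2]
  have hexp : Real.exp (8 / θ * a (n - i + 1) ^ θ) ≤ Real.exp (8 / θ) := by
    apply Real.exp_le_exp.2
    have := Real.rpow_le_one (hpos (n - i + 1)).le (hle1 _) hθ0.le
    have h8 : 0 < 8 / θ := by positivity
    nlinarith
  rcases le_total y x with h | h
  · obtain ⟨X, Y, p, q, hX, hY, h1, h2, h3, hp, hq, q0, qp, hlog⟩ :=
      iid_main θ hθ0 hθ1 a ha0 hrec n y x hy.1 h hx.2 i (n - i) (by omega)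
    rw [hX, hY, hp.deriv, hq.deriv, abs_of_nonneg (by linarith), mul_div_assoc,
      Real.log_div (by linarith) (by linarith)]
    have hr : 0 ≤ (X - Y) / (a (n - i) - a (n - i + 1)) := div_nonneg (by linarith) hΔ.le
    refine ⟨hlog.trans (by gcongr), ?_⟩
    apply mul_le_of_le_one_right (Real.exp_pos _).le
    rw [div_le_one hΔ]; linarith
  · obtain ⟨X, Y, p, q, hX, hY, h1, h2, h3, hp, hq, q0, qp, hlog⟩ :=
      iid_main θ hθ0 hθ1 a ha0 hrec n x y hx.1 h hy.2 i (n - i) (by omega)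
    rw [hX, hY, hp.deriv, hq.deriv, abs_sub_comm, abs_of_nonneg (by linarith), mul_div_assoc]
    have hr : 0 ≤ (X - Y) / (a (n - i) - a (n - i + 1)) := div_nonneg (by linarith) hΔ.le
    constructor
    · refine (Real.log_nonpos (by apply div_nonneg <;> linarith) ?_).trans (by positivity)
      rw [div_le_one (by linarith)]; exact qp
    · apply mul_le_of_le_one_right (Real.exp_pos _).le
      rw [div_le_one hΔ]; linarith
end

section
/- Let (Ω, ℱ, P) be a probability space, (𝒢_i)_{i≥1} a filtration of sub-σ-algebras of ℱ, p ≥ 1 a real number, and X₁, …, X_n centered random variables in L^{2p}(P) with each X_i measurable with respect to 𝒢_i. For 1 ≤ i ≤ n set b_{i,n} = max_{i ≤ k ≤ n} ‖ X_i · Σ_{j=i}^{k} E(X_j | 𝒢_i) ‖_{L^p}. Then E|X₁ + ⋯ + X_n|^{2p} ≤ ( 4p · Σ_{i=1}^n b_{i,n} )^p. -/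
open MeasureTheory

namespace Rio

lemma phi_deriv (q : ℝ) (hq : 0 ≤ q) (x : ℝ) :
    HasDerivAt (fun x : ℝ => x * |x| ^ q) ((q + 1) * |x| ^ q) x := by
  rcases eq_or_lt_of_le hq with h0 | h0
  · subst h0
    simpa using hasDerivAt_id' x
  rcases eq_or_ne x 0 with hx | hx
  · subst hx
    rw [hasDerivAt_iff_tendsto_slope]
    have h1 : Filter.Tendsto (fun y : ℝ => |y| ^ q) (nhdsWithin 0 {0}ᶜ) (nhds ((q + 1) * |(0:ℝ)| ^ q)) := by
      have : Continuous (fun y : ℝ => |y| ^ q) := continuous_abs.rpow_const (fun _ => Or.inr hq)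
      have h2 := this.tendsto 0
      simp only [abs_zero, Real.zero_rpow h0.ne', mul_zero] at h2 ⊢
      exact h2.mono_left nhdsWithin_le_nhds
    refine h1.congr' ?_
    filter_upwards [self_mem_nhdsWithin] with y hy
    have hy' : y ≠ 0 := hy
    simp [slope_def_field, hy']
  · have h := (hasDerivAt_id x).mul ((hasDerivAt_abs hx).rpow_const (p := q) (Or.inl (abs_ne_zero.2 hx)))
    refine h.congr_deriv ?_
    have hpos := abs_pos.2 hx
    rw [Real.rpow_sub_one hpos.ne']
    simp only [id]
    have : x * (SignType.sign x : ℝ) = |x| := by rw [mul_comm]; exact sign_mul_self x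
    field_simp
    linear_combination q * this

lemma convex_ineq (p : ℝ) (hp : 1 ≤ p) (a b : ℝ) :
    |b| ^ (2 * p) - |a| ^ (2 * p) ≤ 2 * p * (b * |b| ^ (2 * p - 2)) * (b - a) := by
  have hc : (2 * p).HolderConjugate (2 * p / (2 * p - 1)) :=
    Real.HolderConjugate.conjExponent (by linarith)
  have h := Real.young_inequality_of_nonneg (abs_nonneg a)
    (Real.rpow_nonneg (abs_nonneg b) (2 * p - 1)) hc
  rw [← Real.rpow_mul (abs_nonneg b)] at h
  have e1 : (2 * p - 1) * (2 * p / (2 * p - 1)) = 2 * p := by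
    have : 2 * p - 1 ≠ 0 := by linarith
    field_simp
  rw [e1] at h
  have e2 : b * |b| ^ (2 * p - 2) * b = |b| ^ (2 * p) := by
    rcases eq_or_ne b 0 with hb | hb
    · subst hb; simp [Real.zero_rpow (show 2 * p ≠ 0 by linarith)]
    · have := abs_pos.2 hb
      rw [show 2 * p = (2 * p - 2) + 2 by ring, Real.rpow_add this]
      simp only [Real.rpow_two, sq_abs]
      ring_nf
  have e3 : |b * |b| ^ (2 * p - 2)| = |b| ^ (2 * p - 1) := by
    rw [abs_mul, abs_of_nonneg (Real.rpow_nonneg (abs_nonneg b) _)]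
    rcases eq_or_ne b 0 with hb | hb
    · subst hb; simp [Real.zero_rpow (show 2 * p - 1 ≠ 0 by linarith)]
    · have := abs_pos.2 hb
      rw [show 2 * p - 1 = (2 * p - 2) + 1 by ring, Real.rpow_add this, Real.rpow_one]
      ring
  have e4 : b * |b| ^ (2 * p - 2) * a ≤ |a| * |b| ^ (2 * p - 1) := by
    rw [← e3, ← abs_mul, mul_comm a]; exact le_abs_self _
  have hp0 : 0 < 2 * p := by linarith
  have h5 := mul_le_mul_of_nonneg_left (e4.trans h) hp0.le
  have e6 : 2 * p * (|a| ^ (2 * p) / (2 * p) + |b| ^ (2 * p) / (2 * p / (2 * p - 1)))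
      = |a| ^ (2 * p) + (2 * p - 1) * |b| ^ (2 * p) := by
    have : 2 * p - 1 ≠ 0 := by linarith
    field_simp
  rw [e6] at h5
  have e7 : 2 * p * (b * |b| ^ (2 * p - 2)) * (b - a)
     = 2 * p * (b * |b| ^ (2 * p - 2) * b) - 2 * p * (b * |b| ^ (2 * p - 2) * a) := by ring
  rw [e7, e2]
  linarith

lemma gron (p : ℝ) (hp : 1 ≤ p) (A b : ℝ) (hA : 0 ≤ A) (hb : 0 ≤ b) (f : ℝ → ℝ)
    (hf : Continuous f) (hf0 : ∀ t, 0 ≤ f t)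
    (h : ∀ t ∈ Set.Icc (0:ℝ) 1, f t ^ p ≤ A ^ p + 4 * p ^ 2 * b * ∫ u in (0:ℝ)..t, f u ^ (p - 1)) :
    ∀ t ∈ Set.Icc (0:ℝ) 1, f t ≤ A + 4 * p * b * t := by
  intro t ht
  have hp0 : 0 < p := by linarith
  refine le_of_forall_pos_le_add fun ε hε => ?_
  have hfc : Continuous (fun u => f u ^ (p - 1)) := hf.rpow_const (fun _ => Or.inr (by linarith))
  set H : ℝ → ℝ := fun t => (A + ε) ^ p + 4 * p ^ 2 * b * ∫ u in (0:ℝ)..t, f u ^ (p - 1) with hH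
  have hHd : ∀ t, HasDerivAt H (4 * p ^ 2 * b * f t ^ (p - 1)) t := by
    intro t
    have := (intervalIntegral.integral_hasDerivAt_right (hfc.intervalIntegrable 0 t)
      (hfc.stronglyMeasurableAtFilter _ _) hfc.continuousAt)
    exact (this.const_mul _).const_add _
  have hHpos : ∀ t, 0 ≤ t → 0 < H t := by
    intro t ht
    have : 0 ≤ ∫ u in (0:ℝ)..t, f u ^ (p - 1) :=
      intervalIntegral.integral_nonneg ht fun u _ => Real.rpow_nonneg (hf0 u) _
    have h2 : 0 < (A + ε) ^ p := Real.rpow_pos_of_pos (by linarith) _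
    simp only [hH]; positivity
  have hfH : ∀ t ∈ Set.Icc (0:ℝ) 1, f t ≤ H t ^ (1 / p) := by
    intro t ht
    have h1 : f t ^ p ≤ H t := by
      refine (h t ht).trans ?_
      simp only [hH]
      gcongr; linarith
    have h2 := Real.rpow_le_rpow (Real.rpow_nonneg (hf0 t) p) h1 (z := 1 / p) (by positivity)
    rwa [← Real.rpow_mul (hf0 t), mul_one_div_cancel hp0.ne', Real.rpow_one] at h2
  have hGd : ∀ t, 0 ≤ t → HasDerivAt (fun t => H t ^ (1 / p))
      ((4 * p ^ 2 * b * f t ^ (p - 1)) * (1 / p) * H t ^ (1 / p - 1)) t := fun t ht =>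
    (hHd t).rpow_const (Or.inl (hHpos t ht).ne')
  have key := Convex.image_sub_le_mul_sub_of_deriv_le (convex_Icc (0:ℝ) 1)
    (f := fun t => H t ^ (1 / p)) (C := 4 * p * b)
    (fun s hs => (hGd s hs.1).continuousAt.continuousWithinAt)
    (fun s hs => (hGd s (interior_subset hs).1).differentiableAt.differentiableWithinAt)
    (fun s hs => by
      have hs := interior_subset hs
      rw [(hGd s hs.1).deriv]
      have hG := hHpos s hs.1
      have h1 : f s ^ (p - 1) ≤ H s ^ (1 - 1 / p) := by
        have := Real.rpow_le_rpow (hf0 s) (hfH s hs) (z := p - 1) (by linarith)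
        rw [← Real.rpow_mul hG.le] at this
        convert this using 2
        field_simp
      have h2 : f s ^ (p - 1) * H s ^ (1 / p - 1) ≤ 1 := by
        calc f s ^ (p - 1) * H s ^ (1 / p - 1) ≤ H s ^ (1 - 1 / p) * H s ^ (1 / p - 1) := by gcongr
          _ = 1 := by rw [← Real.rpow_add hG]; simp
      calc _ = 4 * p * b * (f s ^ (p - 1) * H s ^ (1 / p - 1)) := by field_simp
        _ ≤ 4 * p * b * 1 := by gcongr
        _ = _ := by ring)
    0 (by simp) t ht ht.1
  have h0 : H 0 ^ (1 / p) = A + ε := by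
    simp only [hH, intervalIntegral.integral_same, mul_zero, add_zero]
    rw [← Real.rpow_mul (by linarith), mul_one_div_cancel hp0.ne', Real.rpow_one]
  simp only [h0] at key
  have := hfH t ht
  linarith

lemma tele (p : ℝ) (hp : 1 ≤ p) (B b : ℝ) :
    p * (b * ∫ u in (0:ℝ)..1, (B + u * b) ^ (p - 1)) = (B + b) ^ p - B ^ p := by
  have h := intervalIntegral.integral_eq_sub_of_hasDerivAt (a := 0) (b := 1)
    (f := fun u : ℝ => (B + u * b) ^ p) (f' := fun u => b * p * (B + u * b) ^ (p - 1))
    (fun x _ => by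
      have h1 : HasDerivAt (fun u : ℝ => B + u * b) b x := by
        simpa using ((hasDerivAt_id x).mul_const b).const_add B
      exact h1.rpow_const (Or.inr hp))
    (Continuous.intervalIntegrable (by
      refine continuous_const.mul (Continuous.rpow_const (by fun_prop) (fun _ => Or.inr (by linarith)))) _ _)
  simp only [intervalIntegral.integral_const_mul] at h
  simp only [one_mul, zero_mul, add_zero] at h
  rw [← h]; ring

variable {Ω : Type*} {mΩ : MeasurableSpace Ω}

/-- squared `L^{2p}` norm of `A + uX` -/
noncomputable def nsq (P : Measure Ω) (p : ℝ) (A X : Ω → ℝ) (u : ℝ) : ℝ :=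
  (∫ ω, |A ω + u * X ω| ^ (2 * p) ∂P) ^ (1 / p)

lemma nsq_nonneg (P : Measure Ω) (p : ℝ) (A X : Ω → ℝ) (u : ℝ) : 0 ≤ nsq P p A X u :=
  Real.rpow_nonneg (integral_nonneg fun _ => Real.rpow_nonneg (abs_nonneg _) _) _

lemma int_pow {P : Measure Ω} {p : ℝ} (hp : 1 ≤ p) {A : Ω → ℝ}
    (hA : MemLp A (ENNReal.ofReal (2 * p)) P) : Integrable (fun ω => |A ω| ^ (2 * p)) P := by
  have h := hA.integrable_norm_rpow (by simp; linarith) ENNReal.ofReal_ne_top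
  rw [ENNReal.toReal_ofReal (by linarith)] at h
  simpa using h

lemma int_dom {P : Measure Ω} {p : ℝ} (hp : 1 ≤ p) {A X T : Ω → ℝ}
    (hA : MemLp A (ENNReal.ofReal (2 * p)) P) (hX : MemLp X (ENNReal.ofReal (2 * p)) P)
    (hT : MemLp T (ENNReal.ofReal (2 * p)) P) :
    Integrable (fun ω => (|A ω| + |X ω| + |T ω|) ^ (2 * p)) P := by
  have h := int_pow hp ((hA.abs.add hX.abs).add hT.abs)
  refine h.congr (Filter.Eventually.of_forall fun ω => ?_)
  simp only [Pi.add_apply, Pi.abs_apply]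
  rw [abs_of_nonneg (by positivity)]

lemma pow_split {p : ℝ} (hp : 1 ≤ p) {M : ℝ} (hM : 0 ≤ M) :
    M ^ (2 * p - 2) * M * M = M ^ (2 * p) := by
  rcases eq_or_lt_of_le hM with h | h
  · subst h; simp [Real.zero_rpow (show 2 * p ≠ 0 by linarith)]
  · rw [show 2 * p = (2 * p - 2) + 2 by ring, Real.rpow_add h]
    simp only [Real.rpow_two]
    ring_nf

lemma nsq_cont {P : Measure Ω} {p : ℝ} (hp : 1 ≤ p) {A X : Ω → ℝ}
    (hA : MemLp A (ENNReal.ofReal (2 * p)) P) (hX : MemLp X (ENNReal.ofReal (2 * p)) P) :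
    Continuous (nsq P p A X) := by
  refine Continuous.rpow_const ?_ (fun _ => Or.inr (by positivity))
  rw [continuous_iff_continuousAt]
  intro u₀
  refine continuousAt_of_dominated
    (bound := fun ω => (|A ω| + |(fun ω => (|u₀| + 1) * X ω) ω| + |(fun _ => (0:ℝ)) ω|) ^ (2 * p)) ?_ ?_
    (int_dom hp hA (hX.const_mul _) MemLp.zero) ?_
  · refine Filter.Eventually.of_forall fun u => ?_
    exact (int_pow hp (hA.add (hX.const_mul u))).aestronglyMeasurable
  · filter_upwards [Metric.ball_mem_nhds u₀ one_pos] with u hu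
    refine Filter.Eventually.of_forall fun ω => ?_
    have hu' : |u| ≤ |u₀| + 1 := by
      have h1 : |u - u₀| < 1 := by simpa [Real.dist_eq] using hu
      have := abs_sub_abs_le_abs_sub u u₀
      linarith
    rw [Real.norm_of_nonneg (Real.rpow_nonneg (abs_nonneg _) _)]
    refine Real.rpow_le_rpow (abs_nonneg _) ?_ (by linarith)
    simp only [abs_zero, add_zero]
    refine (abs_add_le _ _).trans ?_
    rw [abs_mul, abs_mul, abs_of_nonneg (by positivity : 0 ≤ |u₀| + 1)]
    gcongr
  · refine Filter.Eventually.of_forall fun ω => ?_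
    have : Continuous (fun u : ℝ => |A ω + u * X ω| ^ (2 * p)) :=
      Continuous.rpow_const (by fun_prop) (fun _ => Or.inr (by linarith))
    exact this.continuousAt

lemma memLp_prod {P : Measure Ω} {p : ℝ} (hp : 1 ≤ p) {X T : Ω → ℝ}
    (hX : MemLp X (ENNReal.ofReal (2 * p)) P)
    (hT : MemLp T (ENNReal.ofReal (2 * p)) P) :
    MemLp (fun ω => X ω * T ω) (ENNReal.ofReal p) P := by
  have hm : AEStronglyMeasurable (fun ω => X ω * T ω) P := hX.1.mul hT.1
  rw [← integrable_norm_rpow_iff hm (by simp; linarith) (by simp)]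
  rw [ENNReal.toReal_ofReal (by linarith)]
  refine (int_dom hp hX hT (MemLp.zero)).mono'
    (((hX.1.mul hT.1).norm.aemeasurable.pow_const p).aestronglyMeasurable)
    (Filter.Eventually.of_forall fun ω => ?_)
  rw [Real.norm_of_nonneg (by positivity), Real.rpow_mul (by positivity)]
  refine Real.rpow_le_rpow (norm_nonneg _) ?_ (by linarith)
  simp only [Pi.zero_apply, abs_zero, add_zero, Real.norm_eq_abs, abs_mul, Real.rpow_two]
  nlinarith [abs_nonneg (X ω), abs_nonneg (T ω), mul_nonneg (abs_nonneg (X ω)) (abs_nonneg (T ω))]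

lemma holder {P : Measure Ω} {p : ℝ} (hp : 1 ≤ p) {Z W : Ω → ℝ}
    (hZ : MemLp Z (ENNReal.ofReal (2 * p)) P) (hW : MemLp W (ENNReal.ofReal p) P) :
    ∫ ω, |Z ω| ^ (2 * p - 2) * |W ω| ∂P ≤
      ((∫ ω, |Z ω| ^ (2 * p) ∂P) ^ (1 / p)) ^ (p - 1) * (∫ ω, |W ω| ^ p ∂P) ^ (1 / p) := by
  rcases eq_or_lt_of_le hp with h1 | h1
  · subst h1; simp
  have hc : p.HolderConjugate (p / (p - 1)) := Real.HolderConjugate.conjExponent h1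
  have hp1 : p - 1 ≠ 0 := by linarith
  have hp1' : 0 < p - 1 := by linarith
  have e : ∀ ω, (|Z ω| ^ (2 * p - 2)) ^ (p / (p - 1)) = |Z ω| ^ (2 * p) := by
    intro ω
    rw [← Real.rpow_mul (abs_nonneg _)]
    congr 1
    field_simp
  have hZ' : MemLp (fun ω => |Z ω| ^ (2 * p - 2)) (ENNReal.ofReal (p / (p - 1))) P := by
    have hm : AEStronglyMeasurable (fun ω => |Z ω| ^ (2 * p - 2)) P :=
      (hZ.1.norm.aemeasurable.pow_const (2 * p - 2)).aestronglyMeasurable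
    rw [← integrable_norm_rpow_iff hm (by simp; positivity) (by simp)]
    rw [ENNReal.toReal_ofReal (by positivity)]
    refine (int_pow hp hZ).congr (Filter.Eventually.of_forall fun ω => ?_)
    simp only
    rw [Real.norm_of_nonneg (by positivity), e]
  have h := integral_mul_le_Lp_mul_Lq_of_nonneg hc.symm (μ := P)
    (f := fun ω => |Z ω| ^ (2 * p - 2)) (g := fun ω => |W ω|)
    (Filter.Eventually.of_forall fun ω => by simp only [Pi.zero_apply]; positivity)
    (Filter.Eventually.of_forall fun ω => abs_nonneg _) hZ' hW.abs
  simp only [e] at h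
  refine h.trans (le_of_eq ?_)
  rw [← Real.rpow_mul (integral_nonneg fun ω => by positivity)]
  congr 2
  field_simp

lemma core {P : Measure Ω} [IsProbabilityMeasure P] {p : ℝ} (hp : 1 ≤ p) {A X T : Ω → ℝ}
    (hA : MemLp A (ENNReal.ofReal (2 * p)) P) (hX : MemLp X (ENNReal.ofReal (2 * p)) P)
    (hT : MemLp T (ENNReal.ofReal (2 * p)) P) {t : ℝ} (ht : t ∈ Set.Icc (0:ℝ) 1) :
    ∫ ω, ((A ω + t * X ω) * |A ω + t * X ω| ^ (2 * p - 2) - A ω * |A ω| ^ (2 * p - 2)) * T ω ∂P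
      ≤ (2 * p - 1) * ((∫ ω, |X ω * T ω| ^ p ∂P) ^ (1 / p) *
        ∫ u in (0:ℝ)..t, nsq P p A X u ^ (p - 1)) := by
  have hq : 0 ≤ 2 * p - 2 := by linarith
  have hbd : ∀ u ∈ Set.Icc (0:ℝ) 1, ∀ ω, |A ω + u * X ω| ^ (2 * p - 2) * |X ω * T ω|
      ≤ (|A ω| + |X ω| + |T ω|) ^ (2 * p) := by
    intro u hu ω
    rw [← pow_split hp (by positivity), abs_mul, mul_assoc]
    have h1 : |A ω + u * X ω| ≤ |A ω| + |X ω| + |T ω| := by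
      have := abs_add_le (A ω) (u * X ω)
      rw [abs_mul, abs_of_nonneg hu.1] at this
      nlinarith [abs_nonneg (X ω), abs_nonneg (T ω), hu.2]
    have h2 : |X ω| ≤ |A ω| + |X ω| + |T ω| := by linarith [abs_nonneg (A ω), abs_nonneg (T ω)]
    have h3 : |T ω| ≤ |A ω| + |X ω| + |T ω| := by linarith [abs_nonneg (A ω), abs_nonneg (X ω)]
    gcongr
  have hmeas : ∀ u, AEStronglyMeasurable (fun ω => |A ω + u * X ω| ^ (2 * p - 2)) P := fun u =>
    ((hA.1.add (hX.1.const_mul u)).norm.aemeasurable.pow_const (2 * p - 2)).aestronglyMeasurable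
  set F : ℝ → Ω → ℝ := fun u ω => (2 * p - 1) * (|A ω + u * X ω| ^ (2 * p - 2) * (X ω * T ω)) with hF
  have hpt : ∀ ω, ((A ω + t * X ω) * |A ω + t * X ω| ^ (2 * p - 2) - A ω * |A ω| ^ (2 * p - 2)) * T ω
      = ∫ u in (0:ℝ)..t, F u ω := by
    intro ω
    have h := intervalIntegral.integral_eq_sub_of_hasDerivAt (a := 0) (b := t)
      (f := fun u : ℝ => (A ω + u * X ω) * |A ω + u * X ω| ^ (2 * p - 2) * T ω)
      (f' := fun u => F u ω)
      (fun u _ => by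
        have h1 : HasDerivAt (fun u : ℝ => A ω + u * X ω) (X ω) u := by
          simpa using ((hasDerivAt_id u).mul_const (X ω)).const_add (A ω)
        have h2 := ((phi_deriv (2 * p - 2) hq (A ω + u * X ω)).comp u h1).mul_const (T ω)
        refine h2.congr_deriv ?_
        simp only [hF]; ring)
      (Continuous.intervalIntegrable (by
        have : Continuous (fun u : ℝ => |A ω + u * X ω| ^ (2 * p - 2)) :=
          Continuous.rpow_const (by fun_prop) (fun _ => Or.inr hq)
        simp only [hF]; fun_prop) _ _)
    rw [h]; simp only [zero_mul, add_zero]; ring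
  simp_rw [hpt, intervalIntegral.integral_of_le ht.1]
  have hprod : Integrable (Function.uncurry F) ((volume.restrict (Set.Ioc 0 t)).prod P) := by
    refine Integrable.const_mul ?_ _
    refine ((int_dom hp hA hX hT).comp_snd (volume.restrict (Set.Ioc 0 t))).mono' ?_ ?_
    · have hA' := hA.1.comp_snd (μ := volume.restrict (Set.Ioc (0:ℝ) t))
      have hX' := hX.1.comp_snd (μ := volume.restrict (Set.Ioc (0:ℝ) t))
      have hT' := hT.1.comp_snd (μ := volume.restrict (Set.Ioc (0:ℝ) t))
      have hu : AEStronglyMeasurable (fun x : ℝ × Ω => x.1) ((volume.restrict (Set.Ioc 0 t)).prod P) :=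
        measurable_fst.aestronglyMeasurable
      exact (((hA'.add (hu.mul hX')).norm.aemeasurable.pow_const (2 * p - 2)).aestronglyMeasurable).mul
        (hX'.mul hT')
    · have : ∀ᵐ x ∂((volume.restrict (Set.Ioc (0:ℝ) t)).prod P), x.1 ∈ Set.Ioc (0:ℝ) t := by
        have h0 := ae_restrict_mem (μ := (volume : Measure ℝ)) (measurableSet_Ioc (a := (0:ℝ)) (b := t))
        exact Measure.quasiMeasurePreserving_fst.ae h0
      filter_upwards [this] with x hx
      rw [norm_mul, Real.norm_of_nonneg (by positivity), Real.norm_eq_abs]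
      exact hbd x.1 ⟨hx.1.le, hx.2.trans ht.2⟩ x.2
  rw [← integral_integral_swap hprod, ← intervalIntegral.integral_of_le ht.1,
    ← intervalIntegral.integral_of_le ht.1, ← intervalIntegral.integral_const_mul,
    ← intervalIntegral.integral_const_mul]
  have hc : Continuous (fun u => nsq P p A X u ^ (p - 1)) :=
    (nsq_cont hp hA hX).rpow_const (fun _ => Or.inr (by linarith))
  refine intervalIntegral.integral_mono_on ht.1 ?_ (Continuous.intervalIntegrable (by fun_prop) _ _) ?_
  · rw [intervalIntegrable_iff_integrableOn_Ioc_of_le ht.1]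
    exact hprod.integral_prod_left
  · intro u hu
    have hu1 : u ∈ Set.Icc (0:ℝ) 1 := ⟨hu.1, hu.2.trans ht.2⟩
    simp only [hF, integral_const_mul]
    refine mul_le_mul_of_nonneg_left ?_ (by linarith)
    have hZ : MemLp (fun ω => A ω + u * X ω) (ENNReal.ofReal (2 * p)) P := hA.add (hX.const_mul u)
    have hi : Integrable (fun ω => |A ω + u * X ω| ^ (2 * p - 2) * |X ω * T ω|) P :=
      (int_dom hp hA hX hT).mono' ((hmeas u).mul (hX.1.mul hT.1).norm)
        (Filter.Eventually.of_forall fun ω => by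
          rw [Real.norm_of_nonneg (by positivity)]; exact hbd u hu1 ω)
    have hi2 : Integrable (fun ω => |A ω + u * X ω| ^ (2 * p - 2) * (X ω * T ω)) P :=
      (int_dom hp hA hX hT).mono' ((hmeas u).mul (hX.1.mul hT.1))
        (Filter.Eventually.of_forall fun ω => by
          rw [norm_mul, Real.norm_of_nonneg (by positivity)]; exact hbd u hu1 ω)
    calc _ ≤ ∫ ω, |A ω + u * X ω| ^ (2 * p - 2) * |X ω * T ω| ∂P :=
          integral_mono hi2 hi fun ω => mul_le_mul_of_nonneg_left (le_abs_self _) (by positivity)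
      _ ≤ _ := holder hp hZ (memLp_prod hp hX hT)
      _ = _ := by rw [mul_comm]; rfl

/-- half-normalised derivative of `|x|^(2p)` -/
noncomputable def phi (p : ℝ) (x : ℝ) : ℝ := x * |x| ^ (2 * p - 2)

lemma phi_meas (p : ℝ) : Measurable (phi p) := by
  unfold phi
  exact measurable_id.mul ((measurable_id.abs).pow_const _)

lemma phi_zero (p : ℝ) : phi p 0 = 0 := by simp [phi]

lemma pointwise_tele (p : ℝ) (x : ℕ → ℝ) (m : ℕ) : ∀ c : ℝ,
    ∑ i ∈ Finset.range m, phi p (∑ l ∈ Finset.range (i + 1), x l) * x i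
      + phi p (∑ l ∈ Finset.range m, x l) * c =
    ∑ j ∈ Finset.range m, (phi p (∑ l ∈ Finset.range (j + 1), x l) -
      phi p (∑ l ∈ Finset.range j, x l)) * (∑ i ∈ Finset.Ico j m, x i + c) := by
  induction m with
  | zero => intro c; simp [phi_zero]
  | succ m ih =>
    intro c
    rw [Finset.sum_range_succ, Finset.sum_range_succ (fun j => (phi p (∑ l ∈ Finset.range (j + 1), x l) -
      phi p (∑ l ∈ Finset.range j, x l)) * (∑ i ∈ Finset.Ico j (m + 1), x i + c))]
    have h : ∑ j ∈ Finset.range m, (phi p (∑ l ∈ Finset.range (j + 1), x l) -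
      phi p (∑ l ∈ Finset.range j, x l)) * (∑ i ∈ Finset.Ico j (m + 1), x i + c) =
      ∑ j ∈ Finset.range m, (phi p (∑ l ∈ Finset.range (j + 1), x l) -
      phi p (∑ l ∈ Finset.range j, x l)) * (∑ i ∈ Finset.Ico j m, x i + (x m + c)) := by
      refine Finset.sum_congr rfl fun j hj => ?_
      rw [Finset.sum_Ico_succ_top (Finset.mem_range.1 hj).le, add_assoc]
    rw [h, ← ih (x m + c)]
    simp
    ring

lemma pointwise_le (p : ℝ) (hp : 1 ≤ p) (x : ℕ → ℝ) (m : ℕ) (d : ℝ) :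
    |∑ l ∈ Finset.range m, x l + d| ^ (2 * p) ≤
    2 * p * (∑ j ∈ Finset.range m, (phi p (∑ l ∈ Finset.range (j + 1), x l) -
      phi p (∑ l ∈ Finset.range j, x l)) * (∑ i ∈ Finset.Ico j m, x i + d) +
      (phi p (∑ l ∈ Finset.range m, x l + d) - phi p (∑ l ∈ Finset.range m, x l)) * d) := by
  have h1 : ∀ m, |∑ l ∈ Finset.range m, x l| ^ (2 * p) ≤
      2 * p * ∑ i ∈ Finset.range m, phi p (∑ l ∈ Finset.range (i + 1), x l) * x i := by
    intro m
    induction m with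
    | zero => simp [Real.zero_rpow (show 2 * p ≠ 0 by linarith)]
    | succ m ih =>
      have := convex_ineq p hp (∑ l ∈ Finset.range m, x l) (∑ l ∈ Finset.range (m + 1), x l)
      have e : ∑ l ∈ Finset.range (m + 1), x l - ∑ l ∈ Finset.range m, x l = x m := by
        rw [Finset.sum_range_succ]; ring
      rw [e] at this
      rw [Finset.sum_range_succ (fun i => phi p (∑ l ∈ Finset.range (i + 1), x l) * x i), mul_add]
      simp only [phi] at *
      linarith
  have h2 := convex_ineq p hp (∑ l ∈ Finset.range m, x l) (∑ l ∈ Finset.range m, x l + d)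
  rw [← pointwise_tele]
  have h3 := h1 m
  rw [add_sub_cancel_left] at h2
  simp only [phi] at *
  linarith

lemma int_phi {P : Measure Ω} {p : ℝ} (hp : 1 ≤ p) {A T : Ω → ℝ}
    (hA : MemLp A (ENNReal.ofReal (2 * p)) P) (hT : MemLp T (ENNReal.ofReal (2 * p)) P) :
    Integrable (fun ω => phi p (A ω) * T ω) P := by
  refine (int_dom hp hA hT MemLp.zero).mono'
    (((phi_meas p).comp_aemeasurable hA.1.aemeasurable).aestronglyMeasurable.mul hT.1)
    (Filter.Eventually.of_forall fun ω => ?_)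
  simp only [Pi.zero_apply, abs_zero, add_zero, phi, norm_mul, Real.norm_eq_abs]
  rw [abs_of_nonneg (Real.rpow_nonneg (abs_nonneg _) _), mul_comm |A ω|,
    ← pow_split hp (by positivity)]
  have h1 : |A ω| ≤ |A ω| + |T ω| := by linarith [abs_nonneg (T ω)]
  have h2 : |T ω| ≤ |A ω| + |T ω| := by linarith [abs_nonneg (A ω)]
  have hq : 0 ≤ 2 * p - 2 := by linarith
  gcongr

lemma norm_eq {P : Measure Ω} {p : ℝ} (hp : 1 ≤ p) {W : Ω → ℝ}
    (hW : MemLp W (ENNReal.ofReal p) P) {b : ℝ} (hb0 : 0 ≤ b)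
    (hb : eLpNorm W (ENNReal.ofReal p) P ≤ ENNReal.ofReal b) :
    (∫ ω, |W ω| ^ p ∂P) ^ (1 / p) ≤ b := by
  rw [hW.eLpNorm_eq_integral_rpow_norm (by simp; linarith) ENNReal.ofReal_ne_top,
    ENNReal.toReal_ofReal (by linarith), ENNReal.ofReal_le_ofReal_iff hb0] at hb
  simpa using hb

lemma step (P : Measure Ω) [IsProbabilityMeasure P] (𝒢 : Filtration ℕ mΩ) (p : ℝ) (hp : 1 ≤ p)
    (M : ℕ) (X : ℕ → Ω → ℝ) (hX : ∀ i, MemLp (X i) (ENNReal.ofReal (2 * p)) P)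
    (hm : ∀ i, Measurable[𝒢 i] (X i)) (b : ℕ → ℝ) (hb0 : ∀ i, 0 ≤ b i)
    (hb : ∀ j k, j < k → k ≤ M → eLpNorm (fun ω => X j ω * ∑ i ∈ Finset.Ico j k, (P[X i|𝒢 j]) ω)
      (ENNReal.ofReal p) P ≤ ENNReal.ofReal (b j))
    (m : ℕ) (hmM : m < M) (t : ℝ) (ht : t ∈ Set.Icc (0:ℝ) 1) :
    ∫ ω, |∑ l ∈ Finset.range m, X l ω + t * X m ω| ^ (2 * p) ∂P ≤
      4 * p ^ 2 * (∑ j ∈ Finset.range m, b j *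
        (∫ u in (0:ℝ)..1, nsq P p (fun ω => ∑ l ∈ Finset.range j, X l ω) (X j) u ^ (p - 1)) +
        b m * ∫ u in (0:ℝ)..t, nsq P p (fun ω => ∑ l ∈ Finset.range m, X l ω) (X m) u ^ (p - 1)) := by
  have h1le : 1 ≤ ENNReal.ofReal (2 * p) := by
    rw [ENNReal.one_le_ofReal]; linarith
  have hS : ∀ j, MemLp (fun ω => ∑ l ∈ Finset.range j, X l ω) (ENNReal.ofReal (2 * p)) P :=
    fun j => memLp_finsetSum _ fun i _ => hX i
  have hSm : ∀ k j, j ≤ k + 1 → Measurable[𝒢 k] (fun ω => ∑ l ∈ Finset.range j, X l ω) := by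
    intro k j hj
    refine Finset.measurable_fun_sum _ fun i hi => ?_
    exact (hm i).mono (𝒢.mono (by have := Finset.mem_range.1 hi; omega)) le_rfl
  set R : ℕ → Ω → ℝ := fun j ω => ∑ i ∈ Finset.Ico j m, X i ω + t * X m ω with hR
  have hRL : ∀ j, MemLp (R j) (ENNReal.ofReal (2 * p)) P := fun j =>
    (memLp_finsetSum _ fun i _ => hX i).add ((hX m).const_mul t)
  have hSt : MemLp (fun ω => ∑ l ∈ Finset.range m, X l ω + t * X m ω) (ENNReal.ofReal (2 * p)) P :=
    (hS m).add ((hX m).const_mul t)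
  have hD : ∀ j (T : Ω → ℝ), MemLp T (ENNReal.ofReal (2 * p)) P →
      Integrable (fun ω => (phi p (∑ l ∈ Finset.range (j + 1), X l ω) -
      phi p (∑ l ∈ Finset.range j, X l ω)) * T ω) P := by
    intro j T hT
    simp only [sub_mul]
    exact (int_phi hp (hS (j + 1)) hT).sub (int_phi hp (hS j) hT)
  have hDm : Integrable (fun ω => (phi p (∑ l ∈ Finset.range m, X l ω + t * X m ω) -
      phi p (∑ l ∈ Finset.range m, X l ω)) * (t * X m ω)) P := by
    simp only [sub_mul]
    exact (int_phi hp hSt ((hX m).const_mul t)).sub (int_phi hp (hS m) ((hX m).const_mul t))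
  have hint0 : ∀ (_ : ℕ) (A B : Ω → ℝ), 0 ≤ ∫ u in (0:ℝ)..1, nsq P p A B u ^ (p - 1) := fun j A B =>
    intervalIntegral.integral_nonneg zero_le_one fun u _ => Real.rpow_nonneg (nsq_nonneg _ _ _ _ _) _
  -- the terms `j < m`
  have hterm : ∀ j ∈ Finset.range m, ∫ ω, (phi p (∑ l ∈ Finset.range (j + 1), X l ω) -
      phi p (∑ l ∈ Finset.range j, X l ω)) * R j ω ∂P ≤ (2 * p - 1) * (b j *
        (∫ u in (0:ℝ)..1, nsq P p (fun ω => ∑ l ∈ Finset.range j, X l ω) (X j) u ^ (p - 1))) := by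
    intro j hj
    have hjm := Finset.mem_range.1 hj
    have hT : MemLp (P[R j|𝒢 j]) (ENNReal.ofReal (2 * p)) P := (hRL j).condExp h1le
    have e1 : ∫ ω, (phi p (∑ l ∈ Finset.range (j + 1), X l ω) -
      phi p (∑ l ∈ Finset.range j, X l ω)) * R j ω ∂P = ∫ ω, (phi p (∑ l ∈ Finset.range (j + 1), X l ω) -
      phi p (∑ l ∈ Finset.range j, X l ω)) * (P[R j|𝒢 j]) ω ∂P := by
      have hsm : StronglyMeasurable[𝒢 j] (fun ω => phi p (∑ l ∈ Finset.range (j + 1), X l ω) -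
          phi p (∑ l ∈ Finset.range j, X l ω)) :=
        (((phi_meas p).comp (hSm j (j + 1) le_rfl)).sub
          ((phi_meas p).comp (hSm j j (by omega)))).stronglyMeasurable
      have := condExp_mul_of_stronglyMeasurable_left hsm (hD j (R j) (hRL j))
        ((hRL j).integrable h1le)
      rw [← integral_condExp (𝒢.le j)]
      exact integral_congr_ae this
    rw [e1]
    have hc := core hp (hS j) (hX j) hT (t := 1) (by simp)
    have e2 : ∀ ω, ∑ l ∈ Finset.range (j + 1), X l ω = ∑ l ∈ Finset.range j, X l ω + 1 * X j ω := by
      intro ω; rw [Finset.sum_range_succ, one_mul]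
    simp only [e2, phi]
    refine hc.trans ?_
    refine mul_le_mul_of_nonneg_left (mul_le_mul_of_nonneg_right ?_ (hint0 j _ _)) (by linarith)
    refine norm_eq hp (memLp_prod hp (hX j) hT) (hb0 j) ?_
    have e3 : P[R j|𝒢 j] =ᵐ[P] fun ω => (1 - t) * ∑ i ∈ Finset.Ico j m, (P[X i|𝒢 j]) ω +
        t * ∑ i ∈ Finset.Ico j (m + 1), (P[X i|𝒢 j]) ω := by
      have hXi : ∀ i, Integrable (X i) P := fun i => (hX i).integrable h1le
      have hR' : R j = (∑ i ∈ Finset.Ico j m, X i) + t • X m := by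
        ext ω; simp [hR]
      rw [hR']
      have a1 := condExp_add (m := 𝒢 j) (integrable_finsetSum' (Finset.Ico j m) fun i _ => hXi i)
        ((hXi m).smul t)
      have a2 := condExp_finsetSum (s := Finset.Ico j m) (fun i _ => hXi i) (𝒢 j)
      have a3 := condExp_smul (μ := P) t (X m) (𝒢 j)
      filter_upwards [a1, a2, a3] with ω h1 h2 h3
      rw [h1, Pi.add_apply, h2, h3, Finset.sum_Ico_succ_top hjm.le]
      simp
      ring
    have e4 : (fun ω => X j ω * (P[R j|𝒢 j]) ω) =ᵐ[P]
        (1 - t) • (fun ω => X j ω * ∑ i ∈ Finset.Ico j m, (P[X i|𝒢 j]) ω) +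
        t • (fun ω => X j ω * ∑ i ∈ Finset.Ico j (m + 1), (P[X i|𝒢 j]) ω) := by
      filter_upwards [e3] with ω h
      simp only [h, Pi.add_apply, Pi.smul_apply, smul_eq_mul]; ring
    have hml : ∀ k, MemLp (fun ω => X j ω * ∑ i ∈ Finset.Ico j k, (P[X i|𝒢 j]) ω)
        (ENNReal.ofReal p) P := fun k =>
      memLp_prod hp (hX j) (memLp_finsetSum _ fun i _ => (hX i).condExp h1le)
    rw [eLpNorm_congr_ae e4]
    refine (eLpNorm_add_le ((hml m).1.const_smul _) ((hml (m + 1)).1.const_smul _)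
      (by rw [ENNReal.one_le_ofReal]; exact hp)).trans ?_
    rw [eLpNorm_const_smul, eLpNorm_const_smul, Real.enorm_of_nonneg (by linarith [ht.2]),
      Real.enorm_of_nonneg ht.1]
    calc _ ≤ ENNReal.ofReal (1 - t) * ENNReal.ofReal (b j) + ENNReal.ofReal t * ENNReal.ofReal (b j) := by
          gcongr
          · exact hb j m hjm hmM.le
          · exact hb j (m + 1) (by omega) hmM
      _ = ENNReal.ofReal (b j) := by
          rw [← add_mul, ← ENNReal.ofReal_add (by linarith [ht.2]) ht.1]; simp
  -- the last term
  have hlast : ∫ ω, (phi p (∑ l ∈ Finset.range m, X l ω + t * X m ω) -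
      phi p (∑ l ∈ Finset.range m, X l ω)) * (t * X m ω) ∂P ≤ (2 * p - 1) * (b m *
        (∫ u in (0:ℝ)..t, nsq P p (fun ω => ∑ l ∈ Finset.range m, X l ω) (X m) u ^ (p - 1))) := by
    have hT := (hX m).const_mul t
    have hc := core hp (hS m) (hX m) hT ht
    simp only [phi]
    refine hc.trans ?_
    refine mul_le_mul_of_nonneg_left (mul_le_mul_of_nonneg_right ?_ 
      (intervalIntegral.integral_nonneg ht.1
        fun u _ => Real.rpow_nonneg (nsq_nonneg _ _ _ _ _) _)) (by linarith)
    refine norm_eq hp (memLp_prod hp (hX m) hT) (hb0 m) ?_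
    have e : (fun ω => X m ω * (t * X m ω)) =
        t • (fun ω => X m ω * ∑ i ∈ Finset.Ico m (m + 1), (P[X i|𝒢 m]) ω) := by
      ext ω
      have : P[X m|𝒢 m] = X m :=
        condExp_of_stronglyMeasurable (𝒢.le m) (hm m).stronglyMeasurable ((hX m).integrable h1le)
      simp [this]; ring
    rw [e, eLpNorm_const_smul, Real.enorm_of_nonneg ht.1]
    calc _ ≤ 1 * ENNReal.ofReal (b m) := by
          gcongr
          · simpa using ht.2
          · exact hb m (m + 1) (by omega) hmM
      _ = _ := one_mul _
  have hsum : Integrable (fun ω => ∑ j ∈ Finset.range m, (phi p (∑ l ∈ Finset.range (j + 1), X l ω) -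
      phi p (∑ l ∈ Finset.range j, X l ω)) * R j ω) P :=
    integrable_finsetSum _ fun j _ => hD j (R j) (hRL j)
  calc _ ≤ ∫ ω, 2 * p * (∑ j ∈ Finset.range m, (phi p (∑ l ∈ Finset.range (j + 1), X l ω) -
      phi p (∑ l ∈ Finset.range j, X l ω)) * R j ω +
      (phi p (∑ l ∈ Finset.range m, X l ω + t * X m ω) - phi p (∑ l ∈ Finset.range m, X l ω))
        * (t * X m ω)) ∂P :=
        integral_mono (int_pow hp hSt) ((hsum.add hDm).const_mul _)
          fun ω => pointwise_le p hp (fun i => X i ω) m (t * X m ω)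
    _ = 2 * p * (∑ j ∈ Finset.range m, ∫ ω, (phi p (∑ l ∈ Finset.range (j + 1), X l ω) -
      phi p (∑ l ∈ Finset.range j, X l ω)) * R j ω ∂P + ∫ ω,
      (phi p (∑ l ∈ Finset.range m, X l ω + t * X m ω) - phi p (∑ l ∈ Finset.range m, X l ω))
        * (t * X m ω) ∂P) := by
        rw [integral_const_mul, integral_add hsum hDm,
          integral_finsetSum _ fun j _ => hD j (R j) (hRL j)]
    _ ≤ 2 * p * (∑ j ∈ Finset.range m, (2 * p - 1) * (b j *
        (∫ u in (0:ℝ)..1, nsq P p (fun ω => ∑ l ∈ Finset.range j, X l ω) (X j) u ^ (p - 1))) +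
        (2 * p - 1) * (b m *
        (∫ u in (0:ℝ)..t, nsq P p (fun ω => ∑ l ∈ Finset.range m, X l ω) (X m) u ^ (p - 1)))) := by
        gcongr with j hj
        exact hterm j hj
    _ = 2 * p * (2 * p - 1) * (∑ j ∈ Finset.range m, b j *
        (∫ u in (0:ℝ)..1, nsq P p (fun ω => ∑ l ∈ Finset.range j, X l ω) (X j) u ^ (p - 1)) +
        b m * ∫ u in (0:ℝ)..t, nsq P p (fun ω => ∑ l ∈ Finset.range m, X l ω) (X m) u ^ (p - 1)) := by
        rw [← Finset.mul_sum]; ring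
    _ ≤ _ := by
        refine mul_le_mul_of_nonneg_right (by nlinarith) ?_
        refine add_nonneg (Finset.sum_nonneg fun j _ => mul_nonneg (hb0 j) (hint0 j _ _))
          (mul_nonneg (hb0 m) (intervalIntegral.integral_nonneg ht.1
            fun u _ => Real.rpow_nonneg (nsq_nonneg _ _ _ _ _) _))

lemma nsq_pow (P : Measure Ω) {p : ℝ} (hp : 1 ≤ p) (A X : Ω → ℝ) (u : ℝ) :
    nsq P p A X u ^ p = ∫ ω, |A ω + u * X ω| ^ (2 * p) ∂P := by
  unfold nsq
  rw [← Real.rpow_mul (integral_nonneg fun ω => by positivity), one_div_mul_cancel (by linarith),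
    Real.rpow_one]

lemma main (P : Measure Ω) [IsProbabilityMeasure P] (𝒢 : Filtration ℕ mΩ) (p : ℝ) (hp : 1 ≤ p)
    (M : ℕ) (X : ℕ → Ω → ℝ) (hX : ∀ i, MemLp (X i) (ENNReal.ofReal (2 * p)) P)
    (hm : ∀ i, Measurable[𝒢 i] (X i)) (b : ℕ → ℝ) (hb0 : ∀ i, 0 ≤ b i)
    (hb : ∀ j k, j < k → k ≤ M → eLpNorm (fun ω => X j ω * ∑ i ∈ Finset.Ico j k, (P[X i|𝒢 j]) ω)
      (ENNReal.ofReal p) P ≤ ENNReal.ofReal (b j))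
    (m : ℕ) (hmM : m < M) : ∀ t ∈ Set.Icc (0:ℝ) 1,
    nsq P p (fun ω => ∑ l ∈ Finset.range m, X l ω) (X m) t ≤
      4 * p * (∑ j ∈ Finset.range m, b j) + 4 * p * b m * t := by
  have hS : ∀ j, MemLp (fun ω => ∑ l ∈ Finset.range j, X l ω) (ENNReal.ofReal (2 * p)) P :=
    fun j => memLp_finsetSum _ fun i _ => hX i
  have hB : ∀ j, 0 ≤ ∑ j ∈ Finset.range j, b j := fun j => Finset.sum_nonneg fun i _ => hb0 i
  induction m using Nat.strong_induction_on with
  | _ m ih =>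
  refine gron p hp _ _ (mul_nonneg (by linarith) (hB m)) (hb0 m) _ (nsq_cont hp (hS m) (hX m))
    (fun t => nsq_nonneg _ _ _ _ _) fun t ht => ?_
  rw [nsq_pow P hp]
  refine (step P 𝒢 p hp M X hX hm b hb0 hb m hmM t ht).trans ?_
  rw [mul_add, mul_assoc (4 * p ^ 2) (b m)]
  refine add_le_add ?_ le_rfl
  have hj : ∀ j ∈ Finset.range m, b j * (∫ u in (0:ℝ)..1,
      nsq P p (fun ω => ∑ l ∈ Finset.range j, X l ω) (X j) u ^ (p - 1)) ≤
      (4 * p) ^ (p - 1) / p * ((∑ l ∈ Finset.range (j + 1), b l) ^ p - (∑ l ∈ Finset.range j, b l) ^ p) := by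
    intro j hj
    have hjm := Finset.mem_range.1 hj
    have hle : ∫ u in (0:ℝ)..1, nsq P p (fun ω => ∑ l ∈ Finset.range j, X l ω) (X j) u ^ (p - 1) ≤
        ∫ u in (0:ℝ)..1, (4 * p) ^ (p - 1) * (∑ l ∈ Finset.range j, b l + u * b j) ^ (p - 1) := by
      refine intervalIntegral.integral_mono_on zero_le_one
        (Continuous.intervalIntegrable ((nsq_cont hp (hS j) (hX j)).rpow_const
          (fun _ => Or.inr (by linarith))) _ _)
        (Continuous.intervalIntegrable (continuous_const.mul (Continuous.rpow_const (by fun_prop)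
          (fun _ => Or.inr (by linarith)))) _ _) fun u hu => ?_
      rw [← Real.mul_rpow (by linarith) (add_nonneg (hB j) (mul_nonneg hu.1 (hb0 j)))]
      refine Real.rpow_le_rpow (nsq_nonneg _ _ _ _ _) ?_ (by linarith)
      have := ih j hjm (hjm.trans hmM) u hu
      linarith
    rw [intervalIntegral.integral_const_mul] at hle
    rw [Finset.sum_range_succ, ← tele p hp]
    have hp0 : p ≠ 0 := by linarith
    calc _ ≤ b j * ((4 * p) ^ (p - 1) *
          ∫ u in (0:ℝ)..1, (∑ l ∈ Finset.range j, b l + u * b j) ^ (p - 1)) :=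
          mul_le_mul_of_nonneg_left hle (hb0 j)
      _ = _ := by field_simp
  calc _ ≤ 4 * p ^ 2 * ∑ j ∈ Finset.range m, (4 * p) ^ (p - 1) / p *
        ((∑ l ∈ Finset.range (j + 1), b l) ^ p - (∑ l ∈ Finset.range j, b l) ^ p) := by
        exact mul_le_mul_of_nonneg_left (Finset.sum_le_sum hj) (by positivity)
    _ = 4 * p ^ 2 * ((4 * p) ^ (p - 1) / p * (∑ l ∈ Finset.range m, b l) ^ p) := by
        rw [← Finset.mul_sum, Finset.sum_range_sub (fun j => (∑ l ∈ Finset.range j, b l) ^ p)]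
        simp [Real.zero_rpow (show p ≠ 0 by linarith)]
    _ = (4 * p * ∑ l ∈ Finset.range m, b l) ^ p := by
        rw [Real.mul_rpow (by linarith) (hB m), Real.rpow_sub_one (by linarith)]
        have : p ≠ 0 := by linarith
        field_simp
    _ ≤ _ := le_rfl

end Rio

theorem rio_inequality {Ω : Type*} {mΩ : MeasurableSpace Ω}
    (P : Measure Ω) [IsProbabilityMeasure P]
    (𝒢 : Filtration ℕ mΩ) (p : ℝ) (hp : 1 ≤ p) (n : ℕ) (X : ℕ → Ω → ℝ)
    (hXLp : ∀ i ∈ Finset.Icc 1 n, MemLp (X i) (ENNReal.ofReal (2 * p)) P)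
    (hX0 : ∀ i ∈ Finset.Icc 1 n, ∫ ω, X i ω ∂P = 0)
    (hXmeas : ∀ i ∈ Finset.Icc 1 n, Measurable[𝒢 i] (X i)) :
    (∫ ω, |∑ i ∈ Finset.Icc 1 n, X i ω| ^ (2 * p) ∂P) ≤
      (4 * p * ∑ i ∈ Finset.Icc 1 n,
        ⨆ k : Set.Icc i n,
          (eLpNorm (fun ω => X i ω * ∑ j ∈ Finset.Icc i (k : ℕ), (P[X j|𝒢 i]) ω)
            (ENNReal.ofReal p) P).toReal) ^ p := by
  classical
  have h1le : 1 ≤ ENNReal.ofReal (2 * p) := by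
    rw [ENNReal.one_le_ofReal]; linarith
  set β : ℕ → ℝ := fun i => ⨆ k : Set.Icc i n,
          (eLpNorm (fun ω => X i ω * ∑ j ∈ Finset.Icc i (k : ℕ), (P[X j|𝒢 i]) ω)
            (ENNReal.ofReal p) P).toReal with hβ
  set X' : ℕ → Ω → ℝ := fun i => if i ∈ Finset.Icc 1 n then X i else 0 with hX'
  set b : ℕ → ℝ := fun i => if i ∈ Finset.Icc 1 n then β i else 0 with hbdef
  have hX'L : ∀ i, MemLp (X' i) (ENNReal.ofReal (2 * p)) P := by
    intro i
    simp only [hX']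
    split_ifs with h
    · exact hXLp i h
    · exact MemLp.zero
  have hX'm : ∀ i, Measurable[𝒢 i] (X' i) := by
    intro i
    simp only [hX']
    split_ifs with h
    · exact hXmeas i h
    · exact measurable_const
  have hβ0 : ∀ i, 0 ≤ β i := fun i => Real.iSup_nonneg fun k => ENNReal.toReal_nonneg
  have hb0 : ∀ i, 0 ≤ b i := by
    intro i
    simp only [hbdef]
    split_ifs with h
    · exact hβ0 i
    · exact le_rfl
  have hb : ∀ j k, j < k → k ≤ n + 1 →
      eLpNorm (fun ω => X' j ω * ∑ i ∈ Finset.Ico j k, (P[X' i|𝒢 j]) ω)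
      (ENNReal.ofReal p) P ≤ ENNReal.ofReal (b j) := by
    intro j k hjk hk
    by_cases h : j ∈ Finset.Icc 1 n
    · have hj := Finset.mem_Icc.1 h
      have hbj : b j = β j := by simp only [hbdef, if_pos h]
      have hXj : X' j = X j := by simp only [hX', if_pos h]
      have hmem := Rio.memLp_prod hp (hX'L j) (memLp_finsetSum (Finset.Ico j k)
        fun i _ => (hX'L i).condExp (m := 𝒢 j) h1le)
      rw [hbj, ← ENNReal.ofReal_toReal hmem.2.ne]
      refine ENNReal.ofReal_le_ofReal ?_
      have hs : ∀ ω, ∑ i ∈ Finset.Ico j k, (P[X' i|𝒢 j]) ω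
          = ∑ i ∈ Finset.Icc j (k - 1), (P[X i|𝒢 j]) ω := by
        intro ω
        have : Finset.Ico j k = Finset.Icc j (k - 1) := by
          ext i; simp only [Finset.mem_Ico, Finset.mem_Icc]; omega
        rw [this]
        refine Finset.sum_congr rfl fun i hi => ?_
        have hi' : i ∈ Finset.Icc 1 n := by
          simp only [Finset.mem_Icc] at hi ⊢; omega
        have : X' i = X i := by simp only [hX', if_pos hi']
        rw [this]
      simp only [hs, hXj]
      have hbdd := (Set.finite_range (fun k : Set.Icc j n =>
          (eLpNorm (fun ω => X j ω * ∑ i ∈ Finset.Icc j (k : ℕ), (P[X i|𝒢 j]) ω)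
            (ENNReal.ofReal p) P).toReal)).bddAbove
      exact le_ciSup hbdd ⟨k - 1, by constructor <;> omega⟩
    · have hXj : X' j = 0 := by simp only [hX', if_neg h]
      simp [hXj]
  have key := Rio.main P 𝒢 p hp (n + 1) X' hX'L hX'm b hb0 hb n (by omega) 1 (by simp)
  have hsub : Finset.Icc 1 n ⊆ Finset.range (n + 1) := by
    intro i hi; simp only [Finset.mem_Icc, Finset.mem_range] at *; omega
  have hsumX : ∀ ω, ∑ i ∈ Finset.Icc 1 n, X i ω =
      ∑ l ∈ Finset.range n, X' l ω + 1 * X' n ω := by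
    intro ω
    rw [one_mul, ← Finset.sum_range_succ (fun l => X' l ω)]
    rw [← Finset.sum_subset hsub (fun i _ hi => by simp only [hX', if_neg hi, Pi.zero_apply])]
    exact Finset.sum_congr rfl fun i hi => by simp only [hX', if_pos hi]
  have hsumb : ∑ i ∈ Finset.Icc 1 n, β i = ∑ l ∈ Finset.range n, b l + b n := by
    rw [← Finset.sum_range_succ]
    rw [← Finset.sum_subset hsub (fun i _ hi => by simp only [hbdef, if_neg hi])]
    exact Finset.sum_congr rfl fun i hi => by simp only [hbdef, if_pos hi]
  rw [hsumb]
  simp only [hsumX]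
  rw [← Rio.nsq_pow P hp (fun ω => ∑ l ∈ Finset.range n, X' l ω) (X' n) 1]
  refine Real.rpow_le_rpow (Rio.nsq_nonneg _ _ _ _ _) ?_ (by linarith)
  linarith
end
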